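/- arXiv:1712.03546 — 2 statements merged into one kernel-verified Lean document; each statement's English description precedes it below -/
import Mathlib

section
/- Let f be a homogeneous polynomial of degree 3 in six variables over ℂ, and let p, v, w ∈ ℂ⁶ be such that f vanishes identically on the span of p and v, and f vanishes identically on the span of p and w. Then there exists a homogeneous polynomial L of degree 1 in three variables s, t, u over ℂ such that f(s·v + t·w + u·p) = s·t·L(s,t,u) for all s, t, u ∈ ℂ. (This produces the residual line of the plane spanned by p, v, w: the intersection of the cubic {f = 0} with this plane is the union of the two lines through p and a third line {L = 0}.) -/
open MvPolynomial

/-!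
Restricted to the plane, `f` becomes a ternary form `g` in the coordinates `s, t, u`. The two lines
on which `f` vanishes are the coordinate lines `t = 0` and `s = 0` of this plane, so `g` is
divisible by each of the non-associated primes `X 0` and `X 1`, hence by their product. The quotient
is the form `L`, homogeneous of degree two less than `f`.
-/

lemma eval_bind₁ {σ τ R : Type*} [CommSemiring R] (h : σ → MvPolynomial τ R) (x : τ → R)
    (g : MvPolynomial σ R) : eval x (bind₁ h g) = eval (fun i => eval x (h i)) g :=
  eval₂Hom_bind₁ _ _ _ _

section Divisibility

variable {σ R : Type*}

lemma X_dvd_sub_bind₁_update_X_zero [CommRing R] [DecidableEq σ] (i : σ) (g : MvPolynomial σ R) :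
    X i ∣ g - bind₁ (Function.update X i 0) g := by
  set π := Ideal.Quotient.mk (Ideal.span {(X i : MvPolynomial σ R)})
  have π_X_self : π (X i) = 0 := Ideal.Quotient.mk_singleton_self _
  have π_comp : π.comp (bind₁ (Function.update X i 0)).toRingHom = π := by
    refine ringHom_ext (fun r => by simp) fun j => ?_
    obtain rfl | hj := eq_or_ne j i
    · simp [π_X_self]
    · simp [hj]
  rw [← Ideal.mem_span_singleton, ← Ideal.Quotient.mk_eq_mk_iff_sub_mem]
  exact (RingHom.congr_fun π_comp g).symm

lemma eval_bind₁_update_X_zero [CommSemiring R] [DecidableEq σ] (i : σ) (x : σ → R)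
    (g : MvPolynomial σ R) :
    eval x (bind₁ (Function.update X i 0) g) = eval (Function.update x i 0) g := by
  rw [eval_bind₁]
  congr 2
  funext j
  obtain rfl | hj := eq_or_ne j i
  · simp
  · simp [hj]

lemma X_dvd_iff_forall_eval_eq_zero [CommRing R] [IsDomain R] [Infinite R] {i : σ}
    {g : MvPolynomial σ R} : X i ∣ g ↔ ∀ x : σ → R, x i = 0 → eval x g = 0 := by
  classical
  refine ⟨?_, fun hg => ?_⟩
  · rintro ⟨q, rfl⟩ x hx
    simp [hx]
  · have bind_eq_zero : bind₁ (Function.update X i 0) g = 0 := MvPolynomial.funext fun x => by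
      rw [eval_bind₁_update_X_zero, hg _ (Function.update_self ..), map_zero]
    simpa only [bind_eq_zero, sub_zero] using X_dvd_sub_bind₁_update_X_zero i g

lemma X_mul_X_dvd [CommRing R] [IsDomain R] {i j : σ} (hij : i ≠ j) {g : MvPolynomial σ R}
    (hi : X i ∣ g) (hj : X j ∣ g) : X i * X j ∣ g := by
  obtain ⟨q, rfl⟩ := hi
  have not_dvd : ¬ (X j : MvPolynomial σ R) ∣ X i := fun h => hij (X_dvd_X.mp h).symm
  exact mul_dvd_mul_left _ ((X_dvd_mul_iff.mp hj).resolve_left not_dvd)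

lemma isHomogeneous_of_X_mul [CommSemiring R] {i : σ} {q : MvPolynomial σ R} {n : ℕ}
    (h : (X i * q).IsHomogeneous (n + 1)) : q.IsHomogeneous n := by
  intro d hd
  have weight_eq := @h (Finsupp.single i 1 + d) (by rwa [coeff_X_mul])
  rw [map_add, Finsupp.weight_single, Pi.one_apply, smul_eq_mul, mul_one, add_comm] at weight_eq
  exact Nat.add_right_cancel weight_eq

end Divisibility

section RestrictToSpan

variable {σ τ R : Type*} [CommSemiring R] [Fintype τ]

/-- The restriction of polynomials to the span of the vectors `b j`, written in the coordinates
`x ↦ ∑ j, x j • b j` on that span. The `b j` may be linearly dependent. -/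
noncomputable def restrictToSpan (b : τ → σ → R) : MvPolynomial σ R →ₐ[R] MvPolynomial τ R :=
  bind₁ fun i => ∑ j, C (b j i) * X j

lemma eval_restrictToSpan (b : τ → σ → R) (f : MvPolynomial σ R) (x : τ → R) :
    eval x (restrictToSpan b f) = eval (∑ j, x j • b j) f := by
  rw [restrictToSpan, eval_bind₁]
  congr 2
  funext i
  simp [mul_comm]

lemma isHomogeneous_restrictToSpan (b : τ → σ → R) {f : MvPolynomial σ R} {n : ℕ}
    (hf : f.IsHomogeneous n) : (restrictToSpan b f).IsHomogeneous n := by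
  have coord_isHomogeneous (i : σ) : (∑ j, C (b j i) * X j).IsHomogeneous 1 :=
    IsHomogeneous.sum _ _ 1 fun j _ => isHomogeneous_C_mul_X (b j i) j
  simpa only [restrictToSpan, aeval_eq_bind₁, one_mul] using hf.aeval _ coord_isHomogeneous

end RestrictToSpan

theorem residual_line_of_plane_general {σ R : Type*} [CommRing R] [IsDomain R] [Infinite R]
    {n : ℕ} (f : MvPolynomial σ R) (hf : f.IsHomogeneous (n + 2)) (p v w : σ → R)
    (hv : ∀ s t : R, eval (s • p + t • v) f = 0)
    (hw : ∀ s t : R, eval (s • p + t • w) f = 0) :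
    ∃ L : MvPolynomial (Fin 3) R, L.IsHomogeneous n ∧
      ∀ s t u : R, eval (s • v + t • w + u • p) f = s * t * eval ![s, t, u] L := by
  set g := restrictToSpan ![v, w, p] f
  have eval_g (x : Fin 3 → R) : eval x g = eval (x 0 • v + x 1 • w + x 2 • p) f := by
    simp [g, eval_restrictToSpan, Fin.sum_univ_three]
  have X_zero_dvd : X 0 ∣ g := X_dvd_iff_forall_eval_eq_zero.mpr fun x hx => by
    rw [eval_g, hx, zero_smul, zero_add, add_comm, hw]
  have X_one_dvd : X 1 ∣ g := X_dvd_iff_forall_eval_eq_zero.mpr fun x hx => by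
    rw [eval_g, hx, zero_smul, add_zero, add_comm, hv]
  obtain ⟨L, hL⟩ := X_mul_X_dvd zero_ne_one X_zero_dvd X_one_dvd
  have hg : (X 0 * (X 1 * L)).IsHomogeneous (n + 2) := by
    rw [← mul_assoc, ← hL]
    exact isHomogeneous_restrictToSpan _ hf
  refine ⟨L, isHomogeneous_of_X_mul (isHomogeneous_of_X_mul hg), fun s t u => ?_⟩
  calc eval (s • v + t • w + u • p) f = eval ![s, t, u] g := (eval_g ![s, t, u]).symm
    _ = s * t * eval ![s, t, u] L := by simp [hL]

/-- If a homogeneous cubic `f` in six variables vanishes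
identically on the span of `p, v` and on the span of `p, w`, then there is a
homogeneous linear form `L` in three variables `s, t, u` with
`f(s·v + t·w + u·p) = s·t·L(s,t,u)`; the line `{L = 0}` is the residual line
of the plane spanned by `p, v, w`. -/
theorem residual_line_of_plane
    (f : MvPolynomial (Fin 6) ℂ) (hf : f.IsHomogeneous 3)
    (p v w : Fin 6 → ℂ)
    (hv : ∀ s t : ℂ, eval (s • p + t • v) f = 0)
    (hw : ∀ s t : ℂ, eval (s • p + t • w) f = 0) :
    ∃ L : MvPolynomial (Fin 3) ℂ, L.IsHomogeneous 1 ∧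
      ∀ s t u : ℂ, eval (s • v + t • w + u • p) f = s * t * eval ![s, t, u] L :=
  residual_line_of_plane_general f hf p v w hv hw
end

section
/- Let f be a homogeneous polynomial of degree 3 in six variables over ℂ and suppose all partial derivatives of f vanish at the point e5 = (0,...,0,1) and f(e5) = 0, so that f = x5·f2 + f3 with f2, f3 homogeneous of degrees 2, 3 in x0,...,x4 only. Let q ∈ ℂ⁵ be nonzero with f2(q) = 0 and f3(q) = 0 (so the line through p = [e5] and [q] lies on the cubic). Then for every i = 0,...,4: (∂f/∂xᵢ)(s·(q,0) + t·e5) = s²·(∂f3/∂xᵢ)(q) + s·t·(∂f2/∂xᵢ)(q) for all s, t ∈ ℂ; in particular, every point of the line through (q,0) and e5 other than the point e5 itself is a singular point of {f = 0} if and only if (∂f2/∂xᵢ)(q) = 0 and (∂f3/∂xᵢ)(q) = 0 for all i = 0,...,4. -/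
open MvPolynomial

/-!
For `f = xₙ g + h` and `i < n`, the derivative `∂ᵢ f = xₙ ∂ᵢ g + ∂ᵢ h` has the same shape as `f`.
Homogeneity of `g` and `h` then gives `∂ᵢ f` on the line through `(q, 0)` and `eₙ`, while
`∂ₙ f = g` vanishes on that line because `g(q) = 0`. The two points `(q, 0)` and `(q, 1)` already
separate the contributions of `∂ᵢ h(q)` and `∂ᵢ g(q)`.
-/

section General

variable {R σ τ : Type*} [CommSemiring R]

/-- The point `a` is a singular point of the hypersurface `{f = 0}`: `f` and all its partial
derivatives vanish at `a`. The hypersurface is taken in affine space, so for homogeneous `f` this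
is a condition on the affine cone. -/
def IsSingularPoint (f : MvPolynomial σ R) (a : σ → R) : Prop :=
  eval a f = 0 ∧ ∀ j, eval a (pderiv j f) = 0

theorem eval_smul_of_isHomogeneous {p : MvPolynomial σ R} {d : ℕ} (hp : p.IsHomogeneous d)
    (s : R) (a : σ → R) : eval (s • a) p = s ^ d * eval a p := by
  rw [eval_eq, eval_eq, Finset.mul_sum]
  refine Finset.sum_congr rfl fun m hm => ?_
  have degree_eq : ∑ i ∈ m.support, m i = d :=
    (hp.degree_eq_sum_deg_support hm).symm
  simp only [Pi.smul_apply, smul_eq_mul, mul_pow, Finset.prod_mul_distrib,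
    Finset.prod_pow_eq_pow_sum, degree_eq]
  ring

theorem pderiv_rename_eq_zero_of_notMem_range {φ : σ → τ} {j : τ} (hj : j ∉ Set.range φ)
    (p : MvPolynomial σ R) : pderiv j (rename φ p) = 0 := by
  classical
  refine pderiv_eq_zero_of_notMem_vars fun hvars => hj ?_
  obtain ⟨i, -, rfl⟩ := Finset.mem_image.mp (vars_rename φ p hvars)
  exact Set.mem_range_self i

end General

section LinearInLast

variable {R : Type*} [CommSemiring R] {n : ℕ}

theorem smul_snoc_zero_add_smul_single_last (q : Fin n → R) (s t : R) :
    s • (Fin.snoc q 0 : Fin (n + 1) → R) + t • Pi.single (Fin.last n) 1 = Fin.snoc (s • q) t := by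
  ext j
  induction j using Fin.lastCases <;> simp

/-- The polynomial `xₙ g + h` in `x₀, …, xₙ`, where `g` and `h` involve only `x₀, …, xₙ₋₁`. If `g`
and `h` are homogeneous of degrees `d - 1` and `d`, it is the equation of a hypersurface of
degree `d` with multiplicity at least `d - 1` at the last coordinate point. -/
noncomputable def linearInLast (g h : MvPolynomial (Fin n) R) : MvPolynomial (Fin (n + 1)) R :=
  X (Fin.last n) * rename Fin.castSucc g + rename Fin.castSucc h

variable (g h : MvPolynomial (Fin n) R)

theorem eval_snoc_linearInLast (a : Fin n → R) (t : R) :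
    eval (Fin.snoc a t) (linearInLast g h) = t * eval a g + eval a h := by
  simp [linearInLast, eval_rename]

theorem pderiv_castSucc_linearInLast (i : Fin n) :
    pderiv i.castSucc (linearInLast g h) = linearInLast (pderiv i g) (pderiv i h) := by
  simp [linearInLast, pderiv_rename (Fin.castSucc_injective n),
    pderiv_X_of_ne (Fin.castSucc_ne_last i).symm]

theorem pderiv_last_linearInLast :
    pderiv (Fin.last n) (linearInLast g h) = rename Fin.castSucc g := by
  have last_notMem : Fin.last n ∉ Set.range (Fin.castSucc (n := n)) := by
    rintro ⟨i, hi⟩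
    exact Fin.castSucc_ne_last i hi
  simp [linearInLast, pderiv_rename_eq_zero_of_notMem_range last_notMem]

theorem isSingularPoint_linearInLast_snoc_iff (a : Fin n → R) (t : R) :
    IsSingularPoint (linearInLast g h) (Fin.snoc a t) ↔
      eval a g = 0 ∧ eval a h = 0 ∧
        ∀ i, t * eval a (pderiv i g) + eval a (pderiv i h) = 0 := by
  simp only [IsSingularPoint, Fin.forall_fin_succ', pderiv_castSucc_linearInLast,
    pderiv_last_linearInLast, eval_snoc_linearInLast, eval_rename, Fin.snoc_comp_castSucc]
  constructor
  · rintro ⟨hf, hpderiv, hg⟩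
    exact ⟨hg, by simpa [hg] using hf, hpderiv⟩
  · rintro ⟨hg, hh, hpderiv⟩
    exact ⟨by simp [hg, hh], hpderiv, hg⟩

variable {g h} {k l d : ℕ}

theorem eval_pderiv_castSucc_linearInLast_on_line (hg : g.IsHomogeneous (k + 1))
    (hh : h.IsHomogeneous (l + 1)) (q : Fin n → R) (i : Fin n) (s t : R) :
    eval (s • (Fin.snoc q 0 : Fin (n + 1) → R) + t • Pi.single (Fin.last n) 1)
        (pderiv i.castSucc (linearInLast g h)) =
      s ^ l * eval q (pderiv i h) + s ^ k * t * eval q (pderiv i g) := by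
  have eval_pderiv_g : eval (s • q) (pderiv i g) = s ^ k * eval q (pderiv i g) :=
    eval_smul_of_isHomogeneous hg.pderiv s q
  have eval_pderiv_h : eval (s • q) (pderiv i h) = s ^ l * eval q (pderiv i h) :=
    eval_smul_of_isHomogeneous hh.pderiv s q
  rw [smul_snoc_zero_add_smul_single_last, pderiv_castSucc_linearInLast, eval_snoc_linearInLast,
    eval_pderiv_g, eval_pderiv_h]
  ring

theorem isSingularPoint_linearInLast_on_line (hg : g.IsHomogeneous k)
    (hh : h.IsHomogeneous l) {q : Fin n → R} (hgq : eval q g = 0) (hhq : eval q h = 0)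
    (hpderiv : ∀ i, eval q (pderiv i g) = 0 ∧ eval q (pderiv i h) = 0) (s t : R) :
    IsSingularPoint (linearInLast g h)
      (s • (Fin.snoc q 0 : Fin (n + 1) → R) + t • Pi.single (Fin.last n) 1) := by
  rw [smul_snoc_zero_add_smul_single_last, isSingularPoint_linearInLast_snoc_iff]
  refine ⟨?_, ?_, fun i => ?_⟩
  · rw [eval_smul_of_isHomogeneous hg, hgq, mul_zero]
  · rw [eval_smul_of_isHomogeneous hh, hhq, mul_zero]
  · rw [eval_smul_of_isHomogeneous hg.pderiv, eval_smul_of_isHomogeneous hh.pderiv,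
      (hpderiv i).1, (hpderiv i).2]
    simp only [mul_zero, add_zero]

theorem singular_points_on_line_through_singularity_general [Nontrivial R]
    (hg : g.IsHomogeneous (d + 1)) (hh : h.IsHomogeneous (d + 2))
    {q : Fin n → R} (hgq : eval q g = 0) (hhq : eval q h = 0) :
    (∀ (i : Fin n) (s t : R),
        eval (s • (Fin.snoc q 0 : Fin (n + 1) → R) + t • Pi.single (Fin.last n) 1)
            (pderiv i.castSucc (linearInLast g h)) =
          s ^ (d + 1) * eval q (pderiv i h) + s ^ d * t * eval q (pderiv i g)) ∧
    ((∀ s t : R, s ≠ 0 → IsSingularPoint (linearInLast g h)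
        (s • (Fin.snoc q 0 : Fin (n + 1) → R) + t • Pi.single (Fin.last n) 1)) ↔
      ∀ i : Fin n, eval q (pderiv i g) = 0 ∧ eval q (pderiv i h) = 0) := by
  have pderiv_on_line := eval_pderiv_castSucc_linearInLast_on_line hg hh q
  refine ⟨pderiv_on_line, fun hsing i => ?_,
    fun hpderiv s t _ => isSingularPoint_linearInLast_on_line hg hh hgq hhq hpderiv s t⟩
  have pderiv_h : eval q (pderiv i h) = 0 := by
    simpa using (pderiv_on_line i 1 0).symm.trans ((hsing 1 0 one_ne_zero).2 i.castSucc)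
  have pderiv_g : eval q (pderiv i g) = 0 := by
    simpa [pderiv_h] using
      (pderiv_on_line i 1 1).symm.trans ((hsing 1 1 one_ne_zero).2 i.castSucc)
  exact ⟨pderiv_g, pderiv_h⟩

end LinearInLast

/-- Let `f = x₅·f₂ + f₃` be a homogeneous cubic singular at
`e₅`, and let `q ∈ ℂ⁵ \ {0}` satisfy `f₂(q) = f₃(q) = 0`. Then for
`i = 0,…,4` one has
`∂ᵢf(s·(q,0) + t·e₅) = s²·∂ᵢf₃(q) + s·t·∂ᵢf₂(q)`; in particular every point of
the line through `(q,0)` and `e₅` other than `e₅` itself is a singular point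
of `{f = 0}` iff `∂ᵢf₂(q) = 0` and `∂ᵢf₃(q) = 0` for all `i`. -/
theorem singular_points_on_line_through_singularity
    (f : MvPolynomial (Fin 6) ℂ) (hf : f.IsHomogeneous 3)
    (e5 : Fin 6 → ℂ) (he5 : e5 = fun i => if i = 5 then 1 else 0)
    (hsing : eval e5 f = 0 ∧ ∀ i : Fin 6, eval e5 (pderiv i f) = 0)
    (f2 f3 : MvPolynomial (Fin 5) ℂ)
    (hf2 : f2.IsHomogeneous 2) (hf3 : f3.IsHomogeneous 3)
    (hdecomp : f = X 5 * rename Fin.castSucc f2 + rename Fin.castSucc f3)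
    (q : Fin 5 → ℂ) (hq : q ≠ 0) (hq2 : eval q f2 = 0) (hq3 : eval q f3 = 0) :
    (∀ (i : Fin 5) (s t : ℂ),
        eval (s • (Fin.snoc q 0 : Fin 6 → ℂ) + t • e5) (pderiv i.castSucc f) =
          s ^ 2 * eval q (pderiv i f3) + s * t * eval q (pderiv i f2)) ∧
    ((∀ s t : ℂ, s ≠ 0 →
        eval (s • (Fin.snoc q 0 : Fin 6 → ℂ) + t • e5) f = 0 ∧
        ∀ j : Fin 6,
          eval (s • (Fin.snoc q 0 : Fin 6 → ℂ) + t • e5) (pderiv j f) = 0) ↔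
      (∀ i : Fin 5, eval q (pderiv i f2) = 0 ∧ eval q (pderiv i f3) = 0)) := by
  obtain rfl : f = linearInLast f2 f3 := hdecomp
  obtain rfl : e5 = Pi.single (Fin.last 5) 1 := by simpa [funext_iff, Pi.single_apply] using! he5
  simpa only [pow_one] using!
    singular_points_on_line_through_singularity_general (d := 1) hf2 hf3 hq2 hq3
end
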